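/- Let L > 0, let (h_j) be a sequence of positive numbers converging to 0, and for each j let f_j : (0,L) → ℝ^{3×3} be measurable with f_j(s) ∈ SO(3) for a.e. s ∈ (0,L). Suppose there is c > 0 such that for every j, every compact interval [a,b] ⊂ (0,L) and every δ ∈ ℝ with |δ| ≤ min(a, L−b), one has ∫_a^b ‖f_j(s+δ) − f_j(s)‖² ds ≤ c(|δ| + h_j)². Then there exist a subsequence (f_{j_k}) and a measurable map R̄ : (0,L) → ℝ^{3×3} with R̄(s) ∈ SO(3) for a.e. s, such that ∫_a^b ‖f_{j_k}(s) − R̄(s)‖² ds → 0 for every compact interval [a,b] ⊂ (0,L); moreover R̄ satisfies ∫_a^b ‖R̄(s+δ) − R̄(s)‖² ds ≤ c δ² for every such [a,b] and every |δ| ≤ min(a, L−b). -/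

import Mathlib

open MeasureTheory Set

noncomputable section

abbrev M3 : Type := Matrix (Fin 3) (Fin 3) ℝ

/-- The special orthogonal group `SO(3)` as a set of `3 × 3` real matrices. -/
def SO3 : Set M3 := {R : M3 | R.transpose * R = 1 ∧ R.det = 1}

/-- The Frobenius norm of a `3 × 3` real matrix. -/
def frob3 (F : M3) : ℝ := Real.sqrt (∑ i, ∑ j, (F i j) ^ 2)

/-- The Frobenius distance from a matrix to `SO(3)`. -/
def distSO3 (F : M3) : ℝ := sInf ((fun R => frob3 (F - R)) '' SO3)

/-- The Euclidean norm on `ℝ³`. -/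
def enorm3 (v : Fin 3 → ℝ) : ℝ := Real.sqrt (∑ i, (v i) ^ 2)

/-- The `3 × 3` matrix with the three given columns. -/
def colMat (a b c : Fin 3 → ℝ) : M3 :=
  Matrix.of fun i j => if j = 0 then a i else if j = 1 then b i else c i

/-- `a ⊗ e₁` : the `3 × 3` matrix whose first column is `a` and whose other columns vanish. -/
def tensE1 (a : Fin 3 → ℝ) : M3 := Matrix.of fun i j => if j = 0 then a i else 0

/-- The normal vector `ν₂(s) = R₀(s) e₂`. -/
def nu2 (R₀ : ℝ → M3) (s : ℝ) : Fin 3 → ℝ := (R₀ s).mulVec (Pi.single 1 1)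

/-- The normal vector `ν₃(s) = R₀(s) e₃`. -/
def nu3 (R₀ : ℝ → M3) (s : ℝ) : Fin 3 → ℝ := (R₀ s).mulVec (Pi.single 2 1)

/-- The parametrization `Ψ⁽ʰ⁾(s,ξ,ζ) = γ(s) + hξν₂(s) + hζν₃(s)` of the thin beam. -/
def Psih (γ : ℝ → Fin 3 → ℝ) (R₀ : ℝ → M3) (h : ℝ) (p : ℝ × ℝ × ℝ) : Fin 3 → ℝ :=
  γ p.1 + (h * p.2.1) • nu2 R₀ p.1 + (h * p.2.2) • nu3 R₀ p.1

/-- The scaled gradient `∇_h z = (∂_s z | h⁻¹ ∂_ξ z | h⁻¹ ∂_ζ z)` as a `3 × 3` matrix. -/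
def scaledGrad (h : ℝ) (z : ℝ × ℝ × ℝ → Fin 3 → ℝ) (p : ℝ × ℝ × ℝ) : M3 :=
  Matrix.of fun i j =>
    if j = 0 then deriv (fun t => z (t, p.2.1, p.2.2) i) p.1
    else if j = 1 then h⁻¹ * deriv (fun t => z (p.1, t, p.2.2) i) p.2.1
    else h⁻¹ * deriv (fun t => z (p.1, p.2.1, t) i) p.2.2

/-!
The primitives of a bounded sequence of functions are uniformly Lipschitz, so along a subsequence
they converge pointwise. The Steklov means are difference quotients of these primitives; hence at
every fixed scale they converge too, and by dominated convergence they are Cauchy in `L¹`. Averaging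
the translation estimate over small translations shows that, at a small scale and for all large
indices, each function is `L¹`-close to its Steklov mean. So the subsequence itself is Cauchy in
`L¹` and, after a further extraction, converges almost everywhere; the limit stays in the compact
target, and boundedness upgrades the convergence to `L²` and passes the quotient estimate to the
limit.
-/

section Compactness

open Filter Topology
open scoped ENNReal

theorem exists_strictMono_forall_cauchySeq_of_equicontinuous {X E : Type*} [TopologicalSpace X]
    [TopologicalSpace.SeparableSpace X] [PseudoMetricSpace E] [ProperSpace E] {F : ℕ → X → E}
    (hF : Equicontinuous F) (hb : ∀ x, Bornology.IsBounded (range fun j => F j x)) :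
    ∃ φ : ℕ → ℕ, StrictMono φ ∧ ∀ x, CauchySeq fun k => F (φ k) x := by
  obtain ⟨D, hD_countable, hD_dense⟩ := TopologicalSpace.exists_countable_dense X
  have := hD_countable.to_subtype
  have hcompact : IsCompact (univ.pi fun y : D => closure (range fun j => F j y)) :=
    isCompact_univ_pi fun y => (hb y).isCompact_closure
  obtain ⟨l, -, φ, hφ, hl⟩ := hcompact.tendsto_subseq (x := fun j (y : D) => F j y)
    fun j y _ => subset_closure (mem_range_self j)
  rw [tendsto_pi_nhds] at hl
  refine ⟨φ, hφ, fun x => Metric.cauchySeq_iff.2 fun ε hε => ?_⟩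
  have hnear : ∀ᶠ y in 𝓝 x, ∀ j, dist (F j x) (F j y) < ε / 3 :=
    Metric.equicontinuousAt_iff_right.1 (hF x) (ε / 3) (by positivity)
  obtain ⟨y, hyD, hy⟩ := hD_dense.inter_nhds_nonempty hnear
  obtain ⟨N, hN⟩ := Metric.cauchySeq_iff.1 (hl ⟨y, hyD⟩).cauchySeq (ε / 3) (by positivity)
  refine ⟨N, fun m hm n hn => ?_⟩
  calc dist (F (φ m) x) (F (φ n) x)
      ≤ dist (F (φ m) x) (F (φ m) y) + dist (F (φ m) y) (F (φ n) y)
          + dist (F (φ n) y) (F (φ n) x) := dist_triangle4 _ _ _ _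
    _ < ε / 3 + ε / 3 + ε / 3 :=
        add_lt_add (add_lt_add (hy _) (hN m hm n hn)) (dist_comm (F (φ n) x) _ ▸ hy _)
    _ = ε := add_thirds ε

theorem lintegral_enorm_integral_translate_sub_le {G E : Type*} [MeasurableSpace G] [Add G]
    [MeasurableAdd₂ G] [NormedAddCommGroup E] [NormedSpace ℝ E] [CompleteSpace E]
    {μ ν : Measure G} [SFinite μ] [IsProbabilityMeasure ν] {g : G → E}
    (hg : StronglyMeasurable g) (hint : ∀ s, Integrable (fun t => g (s + t)) ν) {η : ℝ≥0∞}
    (hη : ∀ᵐ t ∂ν, ∫⁻ s, ‖g (s + t) - g s‖ₑ ∂μ ≤ η) :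
    ∫⁻ s, ‖(∫ t, g (s + t) ∂ν) - g s‖ₑ ∂μ ≤ η := by
  have hmeas : Measurable fun p : G × G => ‖g (p.1 + p.2) - g p.1‖ₑ :=
    ((hg.comp_measurable (measurable_fst.add measurable_snd)).sub
      (hg.comp_measurable measurable_fst)).enorm
  have hpointwise : ∀ s, ‖(∫ t, g (s + t) ∂ν) - g s‖ₑ ≤ ∫⁻ t, ‖g (s + t) - g s‖ₑ ∂ν := by
    intro s
    have hsub : (∫ t, g (s + t) ∂ν) - g s = ∫ t, (g (s + t) - g s) ∂ν := by
      rw [integral_sub (hint s) (integrable_const _), integral_const, probReal_univ, one_smul]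
    exact hsub ▸ enorm_integral_le_lintegral_enorm _
  calc ∫⁻ s, ‖(∫ t, g (s + t) ∂ν) - g s‖ₑ ∂μ
      ≤ ∫⁻ s, ∫⁻ t, ‖g (s + t) - g s‖ₑ ∂ν ∂μ := lintegral_mono hpointwise
    _ = ∫⁻ t, ∫⁻ s, ‖g (s + t) - g s‖ₑ ∂μ ∂ν := lintegral_lintegral_swap hmeas.aemeasurable
    _ ≤ ∫⁻ _, η ∂ν := lintegral_mono_ae hη
    _ = η := by rw [lintegral_const, measure_univ, mul_one]

theorem exists_strictMono_tendsto_ae_of_cauchy_eLpNorm {α E : Type*} [MeasurableSpace α]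
    [NormedAddCommGroup E] [CompleteSpace E] {μ : Measure α} {p : ℝ≥0∞} [Fact (1 ≤ p)]
    {g : ℕ → α → E} (hg : ∀ j, MemLp (g j) p μ)
    (hcauchy : Tendsto (fun n : ℕ × ℕ => eLpNorm (g n.1 - g n.2) p μ) atTop (𝓝 0)) :
    ∃ φ : ℕ → ℕ, StrictMono φ ∧ ∃ G : α → E, StronglyMeasurable G ∧
      ∀ᵐ x ∂μ, Tendsto (fun k => g (φ k) x) atTop (𝓝 (G x)) := by
  have hseq : CauchySeq fun j => (hg j).toLp (g j) := by
    rw [Lp.cauchySeq_Lp_iff_cauchySeq_eLpNorm]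
    exact hcauchy.congr fun n =>
      eLpNorm_congr_ae ((hg n.1).coeFn_toLp.sub (hg n.2).coeFn_toLp).symm
  obtain ⟨G, hG⟩ := cauchySeq_tendsto_of_complete hseq
  obtain ⟨φ, hφ, hlim⟩ := (tendstoInMeasure_of_tendsto_Lp hG).exists_seq_tendsto_ae
  refine ⟨φ, hφ, G, Lp.stronglyMeasurable G, ?_⟩
  filter_upwards [hlim, ae_all_iff.2 fun j => (hg j).coeFn_toLp] with x hx hcoe
  simpa only [hcoe] using hx

theorem lintegral_enorm_le_ofReal_sqrt {α E : Type*} [MeasurableSpace α] [NormedAddCommGroup E]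
    {μ : Measure α} [IsFiniteMeasure μ] {u : α → E} (hu : MemLp u 2 μ) :
    ∫⁻ x, ‖u x‖ₑ ∂μ ≤ ENNReal.ofReal √(μ.real univ * ∫ x, ‖u x‖ ^ 2 ∂μ) := by
  have hL2 : eLpNorm u 2 μ = ENNReal.ofReal √(∫ x, ‖u x‖ ^ 2 ∂μ) := by
    rw [hu.eLpNorm_eq_integral_rpow_norm two_ne_zero ENNReal.ofNat_ne_top, Real.sqrt_eq_rpow]
    norm_num
  calc ∫⁻ x, ‖u x‖ₑ ∂μ = eLpNorm u 1 μ := eLpNorm_one_eq_lintegral_enorm.symm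
    _ ≤ eLpNorm u 2 μ * μ univ ^ (1 / (1 : ℝ≥0∞).toReal - 1 / (2 : ℝ≥0∞).toReal) :=
        eLpNorm_le_eLpNorm_mul_rpow_measure_univ one_le_two hu.1
    _ = ENNReal.ofReal √(∫ x, ‖u x‖ ^ 2 ∂μ) * ENNReal.ofReal √(μ.real univ) := by
        rw [hL2, Real.sqrt_eq_rpow (μ.real univ),
          ← ENNReal.ofReal_rpow_of_nonneg measureReal_nonneg (by norm_num), ofReal_measureReal]
        norm_num
    _ = ENNReal.ofReal √(μ.real univ * ∫ x, ‖u x‖ ^ 2 ∂μ) := by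
        rw [← ENNReal.ofReal_mul (Real.sqrt_nonneg _), mul_comm,
          ← Real.sqrt_mul measureReal_nonneg]

theorem enorm_sub_le_ofReal_add {E : Type*} [SeminormedAddCommGroup E] {x y : E} {C D : ℝ}
    (hx : ‖x‖ ≤ C) (hy : ‖y‖ ≤ D) : ‖x - y‖ₑ ≤ ENNReal.ofReal (C + D) := by
  rw [← ofReal_norm]
  exact ENNReal.ofReal_le_ofReal (norm_sub_le_of_le hx hy)

theorem tendsto_integral_norm_sub_sq {α E : Type*} [MeasurableSpace α] [NormedAddCommGroup E]
    {μ : Measure α} [IsFiniteMeasure μ] {u v : ℕ → α → E} {U V : α → E} {C : ℝ}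
    (hu : ∀ k, AEStronglyMeasurable (u k) μ) (hv : ∀ k, AEStronglyMeasurable (v k) μ)
    (huC : ∀ k, ∀ᵐ x ∂μ, ‖u k x‖ ≤ C) (hvC : ∀ k, ∀ᵐ x ∂μ, ‖v k x‖ ≤ C)
    (hU : ∀ᵐ x ∂μ, Tendsto (fun k => u k x) atTop (𝓝 (U x)))
    (hV : ∀ᵐ x ∂μ, Tendsto (fun k => v k x) atTop (𝓝 (V x))) :
    Tendsto (fun k => ∫ x, ‖u k x - v k x‖ ^ 2 ∂μ) atTop (𝓝 (∫ x, ‖U x - V x‖ ^ 2 ∂μ)) := by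
  refine tendsto_integral_of_dominated_convergence (fun _ => (C + C) ^ 2)
    (fun k => ((hu k).sub (hv k)).norm.pow 2) (integrable_const _) (fun k => ?_) ?_
  · filter_upwards [huC k, hvC k] with x hux hvx
    rw [norm_pow, norm_norm]
    gcongr
    exact norm_sub_le_of_le hux hvx
  · filter_upwards [hU, hV] with x hUx hVx
    exact (hUx.sub hVx).norm.pow 2

section Primitive

variable {E : Type*} [NormedAddCommGroup E]

theorem intervalIntegrable_of_ae_norm_le {g : ℝ → E} {C : ℝ} (hg : AEStronglyMeasurable g)
    (hC : ∀ᵐ s, ‖g s‖ ≤ C) (a b : ℝ) : IntervalIntegrable g volume a b :=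
  ⟨Integrable.of_bound hg.restrict C (ae_restrict_of_ae hC),
    Integrable.of_bound hg.restrict C (ae_restrict_of_ae hC)⟩

variable [NormedSpace ℝ E]

theorem exists_strictMono_forall_cauchySeq_primitive [ProperSpace E] {g : ℕ → ℝ → E} {C : ℝ}
    (hg : ∀ j, AEStronglyMeasurable (g j)) (hC : ∀ j, ∀ᵐ s, ‖g j s‖ ≤ C) :
    ∃ φ : ℕ → ℕ, StrictMono φ ∧ ∀ x, CauchySeq fun k => ∫ t in (0 : ℝ)..x, g (φ k) t := by
  have hint := fun j => intervalIntegrable_of_ae_norm_le (hg j) (hC j)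
  have hbound : ∀ j a b, ‖∫ t in a..b, g j t‖ ≤ C * |b - a| := fun j a b =>
    intervalIntegral.norm_integral_le_of_norm_le_const_ae ((hC j).mono fun _ hs _ => hs)
  refine exists_strictMono_forall_cauchySeq_of_equicontinuous
    (Metric.equicontinuous_of_continuity_modulus (C * ·)
      (Continuous.tendsto' (by fun_prop) _ _ (mul_zero C)) _ fun x y j => ?_)
    fun x => isBounded_iff_forall_norm_le.2 ⟨C * |x - 0|, forall_mem_range.2 fun j => hbound j 0 x⟩
  rw [dist_comm x, dist_comm, dist_eq_norm, Real.dist_eq,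
    intervalIntegral.integral_interval_sub_left (hint j _ _) (hint j _ _)]
  exact hbound j x y

end Primitive

section SteklovMean

variable {E : Type*} [NormedAddCommGroup E] [NormedSpace ℝ E]

/-- The forward Steklov mean of `g` at scale `ε`, i.e. the average of `g` over `(s, s + ε]`. -/
def steklovMean (ε : ℝ) (g : ℝ → E) (s : ℝ) : E := ⨍ t in Ioc 0 ε, g (s + t)

variable {ε C : ℝ} {g : ℝ → E}

theorem isProbabilityMeasure_uniform_Ioc (hε : 0 < ε) :
    IsProbabilityMeasure ((volume.restrict (Ioc 0 ε) univ)⁻¹ • volume.restrict (Ioc 0 ε)) := by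
  have : NeZero (volume.restrict (Ioc 0 ε)) := ⟨by simpa using hε⟩
  infer_instance

theorem steklovMean_eq_inv_smul_primitive_sub (hε : 0 < ε)
    (hg : ∀ a b, IntervalIntegrable g volume a b) (s : ℝ) :
    steklovMean ε g s = ε⁻¹ • ((∫ t in (0 : ℝ)..s + ε, g t) - ∫ t in (0 : ℝ)..s, g t) := by
  rw [intervalIntegral.integral_interval_sub_left (hg _ _) (hg _ _), steklovMean, setAverage_eq,
    Real.volume_real_Ioc_of_le hε.le, sub_zero, ← intervalIntegral.integral_of_le hε.le,
    intervalIntegral.integral_comp_add_left g s, add_zero]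

theorem continuous_steklovMean (hε : 0 < ε) (hg : ∀ a b, IntervalIntegrable g volume a b) :
    Continuous (steklovMean ε g) := by
  have hprim : Continuous fun s => ∫ t in (0 : ℝ)..s, g t :=
    intervalIntegral.continuous_primitive hg 0
  rw [funext (steklovMean_eq_inv_smul_primitive_sub hε hg)]
  fun_prop

theorem norm_steklovMean_le (hε : 0 < ε) (hC : ∀ᵐ s, ‖g s‖ ≤ C) (s : ℝ) :
    ‖steklovMean ε g s‖ ≤ C := by
  have := isProbabilityMeasure_uniform_Ioc hε
  have hshift : ∀ᵐ t, ‖g (s + t)‖ ≤ C :=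
    (measurePreserving_add_left volume s).quasiMeasurePreserving.ae hC
  have := norm_integral_le_of_norm_le_const
    (μ := (volume.restrict (Ioc 0 ε) univ)⁻¹ • volume.restrict (Ioc 0 ε))
    (Measure.ae_smul_measure (ae_restrict_of_ae hshift) _)
  rwa [probReal_univ, mul_one] at this

theorem lintegral_enorm_steklovMean_sub_le [CompleteSpace E] {μ : Measure ℝ} [SFinite μ]
    (hε : 0 < ε) (hg : StronglyMeasurable g) (hC : ∀ᵐ s, ‖g s‖ ≤ C) {η : ℝ≥0∞}
    (hη : ∀ t ∈ Ioc 0 ε, ∫⁻ s, ‖g (s + t) - g s‖ₑ ∂μ ≤ η) :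
    ∫⁻ s, ‖steklovMean ε g s - g s‖ₑ ∂μ ≤ η := by
  have := isProbabilityMeasure_uniform_Ioc hε
  refine lintegral_enorm_integral_translate_sub_le hg (fun s => ?_)
    (Measure.ae_smul_measure (ae_restrict_of_forall_mem measurableSet_Ioc hη) _)
  have hshift : ∀ᵐ t, ‖g (s + t)‖ ≤ C :=
    (measurePreserving_add_left volume s).quasiMeasurePreserving.ae hC
  exact .of_bound (hg.comp_measurable (measurable_const_add s)).aestronglyMeasurable C
    (Measure.ae_smul_measure (ae_restrict_of_ae hshift) _)

end SteklovMean

section TranslationCompactness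

variable {E : Type*} [NormedAddCommGroup E] [NormedSpace ℝ E] {μ : Measure ℝ}
  {g : ℕ → ℝ → E} {C : ℝ}

theorem tendsto_lintegral_enorm_steklovMean_sub_steklovMean [CompleteSpace E] [IsFiniteMeasure μ]
    (hg : ∀ j, AEStronglyMeasurable (g j)) (hC : ∀ j, ∀ᵐ s, ‖g j s‖ ≤ C)
    (hprim : ∀ x, CauchySeq fun j => ∫ t in (0 : ℝ)..x, g j t) {ε : ℝ} (hε : 0 < ε) :
    Tendsto (fun n : ℕ × ℕ => ∫⁻ s, ‖steklovMean ε (g n.1) s - steklovMean ε (g n.2) s‖ₑ ∂μ)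
      atTop (𝓝 0) := by
  have hint := fun j => intervalIntegrable_of_ae_norm_le (hg j) (hC j)
  have hcont := fun j => continuous_steklovMean hε (hint j)
  have hbound : ∀ (n : ℕ × ℕ) s,
      ‖steklovMean ε (g n.1) s - steklovMean ε (g n.2) s‖ₑ ≤ ENNReal.ofReal (C + C) :=
    fun n s => enorm_sub_le_ofReal_add
      (norm_steklovMean_le hε (hC n.1) s) (norm_steklovMean_le hε (hC n.2) s)
  have hpointwise : ∀ s, Tendsto
      (fun n : ℕ × ℕ => ‖steklovMean ε (g n.1) s - steklovMean ε (g n.2) s‖ₑ) atTop (𝓝 0) := by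
    intro s
    obtain ⟨l₁, hl₁⟩ := cauchySeq_tendsto_of_complete (hprim (s + ε))
    obtain ⟨l₀, hl₀⟩ := cauchySeq_tendsto_of_complete (hprim s)
    have hmean : Tendsto (fun j => steklovMean ε (g j) s) atTop (𝓝 (ε⁻¹ • (l₁ - l₀))) := by
      simpa only [steklovMean_eq_inv_smul_primitive_sub hε (hint _)]
        using (hl₁.sub hl₀).const_smul ε⁻¹
    rw [← prod_atTop_atTop_eq]
    simpa using ((hmean.comp tendsto_fst).sub (hmean.comp tendsto_snd)).enorm
  simpa using tendsto_lintegral_filter_of_dominated_convergence (fun _ => ENNReal.ofReal (C + C))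
    (.of_forall fun n => ((hcont n.1).sub (hcont n.2)).enorm.measurable)
    (.of_forall fun n => ae_of_all _ (hbound n))
    (by simpa using ENNReal.mul_ne_top ENNReal.ofReal_ne_top (measure_ne_top μ univ))
    (ae_of_all _ hpointwise)

theorem exists_eventually_lintegral_enorm_steklovMean_sub_le [CompleteSpace E] [SFinite μ]
    (hg : ∀ j, StronglyMeasurable (g j)) (hC : ∀ j, ∀ᵐ s, ‖g j s‖ ≤ C)
    (hshift : Tendsto (fun p : ℕ × ℝ => ∫⁻ s, ‖g p.1 (s + p.2) - g p.1 s‖ₑ ∂μ)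
      (atTop ×ˢ 𝓝[>] 0) (𝓝 0)) {η : ℝ≥0∞} (hη : 0 < η) :
    ∃ ε > 0, ∀ᶠ j in atTop, ∫⁻ s, ‖steklovMean ε (g j) s - g j s‖ₑ ∂μ ≤ η := by
  obtain ⟨P, hP, Q, hQ, hPQ⟩ := eventually_prod_iff.1 (ENNReal.tendsto_nhds_zero.1 hshift η hη)
  obtain ⟨ε, hε, hεQ⟩ := mem_nhdsGT_iff_exists_Ioc_subset.1 hQ
  exact ⟨ε, hε, hP.mono fun j hj => lintegral_enorm_steklovMean_sub_le hε (hg j) (hC j)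
    fun t ht => hPQ hj (hεQ ht)⟩

theorem tendsto_lintegral_enorm_sub_of_translate [CompleteSpace E] [IsFiniteMeasure μ]
    (hg : ∀ j, StronglyMeasurable (g j)) (hC : ∀ j, ∀ᵐ s, ‖g j s‖ ≤ C)
    (hshift : Tendsto (fun p : ℕ × ℝ => ∫⁻ s, ‖g p.1 (s + p.2) - g p.1 s‖ₑ ∂μ)
      (atTop ×ˢ 𝓝[>] 0) (𝓝 0))
    (hprim : ∀ x, CauchySeq fun j => ∫ t in (0 : ℝ)..x, g j t) :
    Tendsto (fun n : ℕ × ℕ => ∫⁻ s, ‖g n.1 s - g n.2 s‖ₑ ∂μ) atTop (𝓝 0) := by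
  refine ENNReal.tendsto_nhds_zero.2 fun η hη => ?_
  have hη3 : 0 < η / 3 := ENNReal.div_pos hη.ne' ENNReal.ofNat_ne_top
  obtain ⟨ε, hε, hmean⟩ :=
    exists_eventually_lintegral_enorm_steklovMean_sub_le hg hC hshift hη3
  have hmeanCauchy := ENNReal.tendsto_nhds_zero.1
    (tendsto_lintegral_enorm_steklovMean_sub_steklovMean (μ := μ)
      (fun j => (hg j).aestronglyMeasurable) hC hprim hε) (η / 3) hη3
  have hcont := fun j => continuous_steklovMean hε
    (intervalIntegrable_of_ae_norm_le (hg j).aestronglyMeasurable (hC j))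
  have hmeas : ∀ j, Measurable fun s => ‖steklovMean ε (g j) s - g j s‖ₑ :=
    fun j => ((hcont j).stronglyMeasurable.sub (hg j)).enorm
  rw [← prod_atTop_atTop_eq] at hmeanCauchy ⊢
  filter_upwards [hmeanCauchy, tendsto_fst.eventually hmean, tendsto_snd.eventually hmean]
    with ⟨m, n⟩ hmn hm hn
  calc ∫⁻ s, ‖g m s - g n s‖ₑ ∂μ
      ≤ ∫⁻ s, (‖steklovMean ε (g m) s - g m s‖ₑ + ‖steklovMean ε (g n) s - g n s‖ₑ
          + ‖steklovMean ε (g m) s - steklovMean ε (g n) s‖ₑ) ∂μ := by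
        refine lintegral_mono fun s => ?_
        simp only [← edist_eq_enorm_sub]
        rw [edist_comm _ (g m s), add_right_comm]
        exact edist_triangle4 _ _ _ _
    _ = ∫⁻ s, ‖steklovMean ε (g m) s - g m s‖ₑ ∂μ + ∫⁻ s, ‖steklovMean ε (g n) s - g n s‖ₑ ∂μ
          + ∫⁻ s, ‖steklovMean ε (g m) s - steklovMean ε (g n) s‖ₑ ∂μ := by
        rw [lintegral_add_left (by exact (hmeas m).add (hmeas n)), lintegral_add_left (hmeas m)]
    _ ≤ η / 3 + η / 3 + η / 3 := by gcongr
    _ = η := ENNReal.add_thirds η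

theorem exists_strictMono_tendsto_ae_of_translate [ProperSpace E] [IsFiniteMeasure μ]
    (hμ : μ ≪ volume) (hg : ∀ j, StronglyMeasurable (g j)) (hC : ∀ j, ∀ᵐ s, ‖g j s‖ ≤ C)
    (hshift : Tendsto (fun p : ℕ × ℝ => ∫⁻ s, ‖g p.1 (s + p.2) - g p.1 s‖ₑ ∂μ)
      (atTop ×ˢ 𝓝[>] 0) (𝓝 0)) :
    ∃ φ : ℕ → ℕ, StrictMono φ ∧ ∃ G : ℝ → E, StronglyMeasurable G ∧
      ∀ᵐ s ∂μ, Tendsto (fun k => g (φ k) s) atTop (𝓝 (G s)) := by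
  obtain ⟨φ, hφ, hprim⟩ := exists_strictMono_forall_cauchySeq_primitive
    (fun j => (hg j).aestronglyMeasurable) hC
  have hcauchy := tendsto_lintegral_enorm_sub_of_translate (fun k => hg (φ k)) (fun k => hC (φ k))
    (hshift.comp (hφ.tendsto_atTop.prodMap tendsto_id)) hprim
  obtain ⟨ψ, hψ, G, hG, hlim⟩ := exists_strictMono_tendsto_ae_of_cauchy_eLpNorm (p := 1)
    (fun k => .of_bound (hg (φ k)).aestronglyMeasurable C (hμ.ae_le (hC (φ k))))
    (by simpa only [eLpNorm_one_eq_lintegral_enorm, Pi.sub_apply] using hcauchy)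
  exact ⟨φ ∘ ψ, hφ.comp hψ, G, hG, hlim⟩

end TranslationCompactness

section IntervalTranslation

variable {E : Type*} [NormedAddCommGroup E] {C L : ℝ}

theorem lintegral_Ioo_enorm_translate_sub_le_lintegral_Icc {g : ℝ → E} {t : ℝ}
    (hC : ∀ᵐ s, ‖g s‖ ≤ C) (ht : 0 ≤ t) :
    ∫⁻ s in Ioo 0 L, ‖g (s + t) - g s‖ₑ ≤
      (∫⁻ s in Icc t (L - t), ‖g (s + t) - g s‖ₑ)
        + ENNReal.ofReal (C + C) * ENNReal.ofReal (t + t) := by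
  have hbound : ∀ᵐ s, ‖g (s + t) - g s‖ₑ ≤ ENNReal.ofReal (C + C) := by
    filter_upwards [hC, (measurePreserving_add_right volume t).quasiMeasurePreserving.ae hC]
      with s hs hst
    exact enorm_sub_le_ofReal_add hst hs
  have hcover : Ioo 0 L ⊆ Icc t (L - t) ∪ (Ioo 0 t ∪ Ioo (L - t) L) := by
    intro s hs
    grind
  have hedges : volume (Ioo 0 t ∪ Ioo (L - t) L) ≤ ENNReal.ofReal (t + t) :=
    (measure_union_le _ _).trans_eq <| by
      rw [Real.volume_Ioo, Real.volume_Ioo, sub_zero, sub_sub_cancel, ENNReal.ofReal_add ht ht]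
  calc ∫⁻ s in Ioo 0 L, ‖g (s + t) - g s‖ₑ
      ≤ ∫⁻ s in Icc t (L - t) ∪ (Ioo 0 t ∪ Ioo (L - t) L), ‖g (s + t) - g s‖ₑ :=
        lintegral_mono_set hcover
    _ ≤ (∫⁻ s in Icc t (L - t), ‖g (s + t) - g s‖ₑ)
          + ∫⁻ s in Ioo 0 t ∪ Ioo (L - t) L, ‖g (s + t) - g s‖ₑ := lintegral_union_le _ _ _
    _ ≤ (∫⁻ s in Icc t (L - t), ‖g (s + t) - g s‖ₑ)
          + ENNReal.ofReal (C + C) * ENNReal.ofReal (t + t) := by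
        gcongr
        calc ∫⁻ s in Ioo 0 t ∪ Ioo (L - t) L, ‖g (s + t) - g s‖ₑ
            ≤ ∫⁻ _ in Ioo 0 t ∪ Ioo (L - t) L, ENNReal.ofReal (C + C) :=
              lintegral_mono_ae (ae_restrict_of_ae hbound)
          _ ≤ ENNReal.ofReal (C + C) * ENNReal.ofReal (t + t) := by
              rw [setLIntegral_const]
              gcongr

theorem lintegral_Ioo_enorm_translate_sub_le_of_integral_sq_le {g : ℝ → E} {t B : ℝ}
    (hg : StronglyMeasurable g) (hC : ∀ᵐ s, ‖g s‖ ≤ C) (ht : 0 ≤ t)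
    (hB : t ≤ L - t → ∫ s in Icc t (L - t), ‖g (s + t) - g s‖ ^ 2 ≤ B) :
    ∫⁻ s in Ioo 0 L, ‖g (s + t) - g s‖ₑ ≤
      ENNReal.ofReal √(L * B) + ENNReal.ofReal (C + C) * ENNReal.ofReal (t + t) := by
  refine (lintegral_Ioo_enorm_translate_sub_le_lintegral_Icc hC ht).trans ?_
  gcongr
  rcases lt_or_ge (L - t) t with hlt | hle
  · simp [Icc_eq_empty_of_lt hlt]
  have hshift : ∀ᵐ s, ‖g (s + t)‖ ≤ C :=
    (measurePreserving_add_right volume t).quasiMeasurePreserving.ae hC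
  have hgt : StronglyMeasurable fun s => g (s + t) :=
    hg.comp_measurable (measurable_add_const t)
  have hLp : MemLp (fun s => g (s + t) - g s) 2 (volume.restrict (Icc t (L - t))) :=
    (MemLp.of_bound hgt.aestronglyMeasurable C (ae_restrict_of_ae hshift)).sub
      (.of_bound hg.aestronglyMeasurable C (ae_restrict_of_ae hC))
  refine (lintegral_enorm_le_ofReal_sqrt hLp).trans ?_
  gcongr
  · linarith
  · rw [measureReal_restrict_apply_univ, Real.volume_real_Icc_of_le hle]
    linarith
  · exact hB hle

theorem tendsto_lintegral_Ioo_enorm_translate_sub {g : ℕ → ℝ → E} {h : ℕ → ℝ} {c : ℝ}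
    (hlim : Tendsto h atTop (𝓝 0)) (hg : ∀ j, StronglyMeasurable (g j))
    (hC : ∀ j, ∀ᵐ s, ‖g j s‖ ≤ C)
    (hquot : ∀ j t, 0 < t → t ≤ L - t →
      ∫ s in Icc t (L - t), ‖g j (s + t) - g j s‖ ^ 2 ≤ c * (t + h j) ^ 2) :
    Tendsto (fun p : ℕ × ℝ => ∫⁻ s in Ioo 0 L, ‖g p.1 (s + p.2) - g p.1 s‖ₑ)
      (atTop ×ˢ 𝓝[>] 0) (𝓝 0) := by
  have hh : Tendsto (fun p : ℕ × ℝ => h p.1) (atTop ×ˢ 𝓝[>] 0) (𝓝 0) := hlim.comp tendsto_fst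
  have ht : Tendsto (fun p : ℕ × ℝ => p.2) (atTop ×ˢ 𝓝[>] 0) (𝓝 0) :=
    tendsto_nhds_of_tendsto_nhdsWithin tendsto_snd
  have hinterior : Tendsto (fun p : ℕ × ℝ => ENNReal.ofReal √(L * (c * (p.2 + h p.1) ^ 2)))
      (atTop ×ˢ 𝓝[>] 0) (𝓝 0) := by
    simpa using ENNReal.tendsto_ofReal
      ((((ht.add hh).pow 2).const_mul c).const_mul L).sqrt
  have hedges : Tendsto
      (fun p : ℕ × ℝ => ENNReal.ofReal (C + C) * ENNReal.ofReal (p.2 + p.2))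
      (atTop ×ˢ 𝓝[>] 0) (𝓝 0) := by
    simpa using ENNReal.Tendsto.const_mul (ENNReal.tendsto_ofReal (ht.add ht))
      (.inr ENNReal.ofReal_ne_top)
  refine tendsto_of_tendsto_of_tendsto_of_le_of_le' tendsto_const_nhds
    (by simpa using hinterior.add hedges) (.of_forall fun _ => zero_le) ?_
  filter_upwards [tendsto_snd.eventually (self_mem_nhdsWithin : Ioi (0 : ℝ) ∈ 𝓝[>] 0)] with p hp
  exact lintegral_Ioo_enorm_translate_sub_le_of_integral_sq_le (hg p.1) (hC p.1) (le_of_lt hp)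
    (hquot p.1 p.2 hp)

theorem exists_strictMono_tendsto_ae_Ioo_of_integral_translate_sub_sq_le [NormedSpace ℝ E]
    [ProperSpace E] {f : ℕ → ℝ → E} {h : ℕ → ℝ} {c : ℝ} (hlim : Tendsto h atTop (𝓝 0))
    (hf : ∀ j, StronglyMeasurable (f j)) (hC₀ : 0 ≤ C)
    (hC : ∀ j, ∀ᵐ s ∂volume.restrict (Ioo 0 L), ‖f j s‖ ≤ C)
    (hquot : ∀ j t, 0 < t → t ≤ L - t →
      ∫ s in Icc t (L - t), ‖f j (s + t) - f j s‖ ^ 2 ≤ c * (t + h j) ^ 2) :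
    ∃ φ : ℕ → ℕ, StrictMono φ ∧ ∃ F : ℝ → E, StronglyMeasurable F ∧
      ∀ᵐ s ∂volume.restrict (Ioo 0 L), Tendsto (fun k => f (φ k) s) atTop (𝓝 (F s)) := by
  -- `[0, L]` rather than `(0, L)`: for `s ∈ [t, L - t]` the point `s + t` may equal `L`.
  let g j := (Icc 0 L).indicator (f j)
  have hgf : ∀ j, EqOn (g j) (f j) (Icc 0 L) := fun j => eqOn_indicator
  have hgm : ∀ j, StronglyMeasurable (g j) := fun j => (hf j).indicator measurableSet_Icc
  have hgC : ∀ j, ∀ᵐ s, ‖g j s‖ ≤ C := by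
    intro j
    have := hC j
    rw [Measure.restrict_congr_set Ioo_ae_eq_Icc, ae_restrict_iff' measurableSet_Icc] at this
    filter_upwards [this] with s hs
    rw [norm_indicator_eq_indicator_norm]
    exact indicator_apply_le' hs fun _ => hC₀
  have hgquot : ∀ j t, 0 < t → t ≤ L - t →
      ∫ s in Icc t (L - t), ‖g j (s + t) - g j s‖ ^ 2 ≤ c * (t + h j) ^ 2 := by
    intro j t ht htL
    refine (setIntegral_congr_fun measurableSet_Icc fun s hs => ?_).trans_le (hquot j t ht htL)
    have hs₀ : s ∈ Icc 0 L := by grind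
    have hst : s + t ∈ Icc 0 L := by grind
    simp only [hgf j hs₀, hgf j hst]
  obtain ⟨φ, hφ, F, hF, hFlim⟩ := exists_strictMono_tendsto_ae_of_translate
    Measure.restrict_le_self.absolutelyContinuous hgm hgC
    (tendsto_lintegral_Ioo_enorm_translate_sub hlim hgm hgC hgquot)
  refine ⟨φ, hφ, F, hF, ?_⟩
  filter_upwards [hFlim, ae_restrict_mem measurableSet_Ioo] with s hs hsL
  simpa only [hgf _ (Ioo_subset_Icc_self hsL)] using hs

end IntervalTranslation

section CompactTarget

variable {E : Type*} [NormedAddCommGroup E] {L c : ℝ} {h : ℕ → ℝ} {f : ℕ → ℝ → E}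

theorem ae_restrict_Icc_translate {p : ℝ → Prop} {a b δ : ℝ} (ha : 0 < a) (hb : b < L)
    (hδ : |δ| ≤ min a (L - b)) (hp : ∀ᵐ s ∂volume.restrict (Ioo 0 L), p s) :
    ∀ᵐ s ∂volume.restrict (Icc a b), p (s + δ) := by
  rw [Measure.restrict_congr_set Ioo_ae_eq_Icc] at hp
  have hmaps : MapsTo (· + δ) (Icc a b) (Icc 0 L) := by
    intro s hs
    grind
  exact ((measurePreserving_add_right volume δ).quasiMeasurePreserving.restrict hmaps).ae hp

theorem setIntegral_norm_translate_sub_sq_le_of_tendsto_ae {F : ℝ → E} {C a b δ : ℝ}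
    (hlim : Tendsto h atTop (𝓝 0)) (hf : ∀ j, StronglyMeasurable (f j))
    (hC : ∀ j, ∀ᵐ s ∂volume.restrict (Ioo 0 L), ‖f j s‖ ≤ C)
    (hF : ∀ᵐ s ∂volume.restrict (Ioo 0 L), Tendsto (fun j => f j s) atTop (𝓝 (F s)))
    (ha : 0 < a) (hb : b < L) (hδ : |δ| ≤ min a (L - b))
    (hquot : ∀ j, ∫ s in Icc a b, ‖f j (s + δ) - f j s‖ ^ 2 ≤ c * (|δ| + h j) ^ 2) :
    ∫ s in Icc a b, ‖F (s + δ) - F s‖ ^ 2 ≤ c * δ ^ 2 := by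
  have hsub := Icc_subset_Ioo ha hb
  have hleft : Tendsto (fun j => ∫ s in Icc a b, ‖f j (s + δ) - f j s‖ ^ 2) atTop
      (𝓝 (∫ s in Icc a b, ‖F (s + δ) - F s‖ ^ 2)) :=
    tendsto_integral_norm_sub_sq
      (fun j => ((hf j).comp_measurable (measurable_add_const δ)).aestronglyMeasurable)
      (fun j => (hf j).aestronglyMeasurable)
      (fun j => ae_restrict_Icc_translate ha hb hδ (hC j))
      (fun j => ae_restrict_of_ae_restrict_of_subset hsub (hC j))
      (ae_restrict_Icc_translate ha hb hδ hF) (ae_restrict_of_ae_restrict_of_subset hsub hF)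
  have hright : Tendsto (fun j => c * (|δ| + h j) ^ 2) atTop (𝓝 (c * δ ^ 2)) := by
    simpa using ((hlim.const_add |δ|).pow 2).const_mul c
  exact le_of_tendsto_of_tendsto' hleft hright hquot

theorem frechet_kolmogorov_SO3_compactness_general [NormedSpace ℝ E] [ProperSpace E] {K : Set E}
    (hK : IsCompact K) (hlim : Tendsto h atTop (𝓝 0)) (hf : ∀ j, StronglyMeasurable (f j))
    (hfK : ∀ j, ∀ᵐ s ∂volume.restrict (Ioo 0 L), f j s ∈ K)
    (hquot : ∀ j a b, 0 < a → a ≤ b → b < L → ∀ δ, |δ| ≤ min a (L - b) →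
      ∫ s in Icc a b, ‖f j (s + δ) - f j s‖ ^ 2 ≤ c * (|δ| + h j) ^ 2) :
    ∃ φ : ℕ → ℕ, StrictMono φ ∧ ∃ F : ℝ → E, StronglyMeasurable F ∧
      (∀ᵐ s ∂volume.restrict (Ioo 0 L), F s ∈ K) ∧
      (∀ a b, 0 < a → a ≤ b → b < L →
        Tendsto (fun k => ∫ s in Icc a b, ‖f (φ k) s - F s‖ ^ 2) atTop (𝓝 0)) ∧
      (∀ a b, 0 < a → a ≤ b → b < L → ∀ δ, |δ| ≤ min a (L - b) →
        ∫ s in Icc a b, ‖F (s + δ) - F s‖ ^ 2 ≤ c * δ ^ 2) := by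
  obtain ⟨C, hC₀, hKC⟩ := hK.isBounded.exists_pos_norm_le
  have hfC : ∀ j, ∀ᵐ s ∂volume.restrict (Ioo 0 L), ‖f j s‖ ≤ C :=
    fun j => (hfK j).mono fun s hs => hKC _ hs
  obtain ⟨φ, hφ, F, hF, hFlim⟩ := exists_strictMono_tendsto_ae_Ioo_of_integral_translate_sub_sq_le
    hlim hf hC₀.le hfC fun j t ht htL => by
      simpa only [abs_of_pos ht] using
        hquot j t (L - t) ht htL (sub_lt_self L ht) t (by simp [abs_of_pos ht])
  have hFK : ∀ᵐ s ∂volume.restrict (Ioo 0 L), F s ∈ K := by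
    filter_upwards [hFlim, ae_all_iff.2 hfK] with s hs hsK
    exact hK.isClosed.mem_of_tendsto hs (.of_forall fun k => hsK (φ k))
  have hFC : ∀ᵐ s ∂volume.restrict (Ioo 0 L), ‖F s‖ ≤ C := hFK.mono fun s hs => hKC _ hs
  refine ⟨φ, hφ, F, hF, hFK, fun a b ha _ hb => ?_, fun a b ha hab hb δ hδ => ?_⟩
  · have hres {p : ℝ → Prop} (hp : ∀ᵐ s ∂volume.restrict (Ioo 0 L), p s) :=
      ae_restrict_of_ae_restrict_of_subset (Icc_subset_Ioo ha hb) hp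
    simpa using tendsto_integral_norm_sub_sq (fun k => (hf (φ k)).aestronglyMeasurable)
      (fun _ => hF.aestronglyMeasurable) (fun k => hres (hfC (φ k))) (fun _ => hres hFC)
      (hres hFlim) (ae_of_all _ fun _ => tendsto_const_nhds)
  · exact setIntegral_norm_translate_sub_sq_le_of_tendsto_ae (hlim.comp hφ.tendsto_atTop)
      (fun k => hf (φ k)) (fun k => hfC (φ k)) hFlim ha hb hδ
      fun k => hquot (φ k) a b ha hab hb δ hδ

end CompactTarget

end Compactness

section RotationGroup

open scoped Matrix.Norms.Frobenius

theorem frob3_eq_norm (A : M3) : frob3 A = ‖A‖ := by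
  simp only [frob3, Matrix.frobenius_norm_def, Real.norm_eq_abs, Real.rpow_two, sq_abs,
    Real.sqrt_eq_rpow]

theorem frobenius_norm_sq_eq_trace_transpose_mul {m n : Type*} [Fintype m] [Fintype n]
    (A : Matrix m n ℝ) : ‖A‖ ^ 2 = (A.transpose * A).trace := by
  rw [Matrix.frobenius_norm_def, ← Real.sqrt_eq_rpow, Real.sq_sqrt (by positivity),
    Finset.sum_comm]
  simp only [Matrix.trace, Matrix.diag, Matrix.mul_apply, Matrix.transpose_apply,
    Real.norm_eq_abs, Real.rpow_two, sq_abs, ← pow_two]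

theorem isCompact_SO3 : IsCompact SO3 := by
  refine Metric.isCompact_of_isClosed_isBounded ?_ ?_
  · exact (isClosed_eq (by fun_prop) continuous_const).inter
      (isClosed_eq (by fun_prop) continuous_const)
  · refine isBounded_iff_forall_norm_le.2 ⟨√3, fun R hR => Real.le_sqrt_of_sq_le ?_⟩
    rw [frobenius_norm_sq_eq_trace_transpose_mul, hR.1, Matrix.trace_one]
    norm_num

theorem stronglyMeasurable_iff_measurable_entries {α m n : Type*} [MeasurableSpace α] [Countable m]
    [Countable n] {A : α → Matrix m n ℝ} :
    StronglyMeasurable A ↔ ∀ i k, Measurable fun s => A s i k := by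
  refine ⟨fun hA i k => ?_, fun hA => ?_⟩
  · have hentry : Continuous fun B : Matrix m n ℝ => B i k := by fun_prop
    exact (hentry.comp_stronglyMeasurable hA).measurable
  · exact (measurable_pi_iff.2 fun i => measurable_pi_iff.2 (hA i)).stronglyMeasurable

end RotationGroup

theorem frechet_kolmogorov_SO3_compactness
    (L : ℝ) (hL : 0 < L)
    (h : ℕ → ℝ) (hpos : ∀ j, 0 < h j)
    (hlim : Filter.Tendsto h Filter.atTop (nhds 0))
    (f : ℕ → ℝ → M3) (hmeas : ∀ j i k, Measurable fun s => f j s i k)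
    (hSO : ∀ j, ∀ᵐ s ∂(volume.restrict (Ioo (0:ℝ) L)), f j s ∈ SO3)
    (c : ℝ) (hc : 0 < c)
    (hquot : ∀ j, ∀ a b : ℝ, 0 < a → a ≤ b → b < L → ∀ δ : ℝ, |δ| ≤ min a (L - b) →
      ∫ s in Icc a b, frob3 (f j (s + δ) - f j s) ^ 2 ≤ c * (|δ| + h j) ^ 2) :
    ∃ φ : ℕ → ℕ, StrictMono φ ∧ ∃ Rb : ℝ → M3,
      (∀ i k, Measurable fun s => Rb s i k) ∧
      (∀ᵐ s ∂(volume.restrict (Ioo (0:ℝ) L)), Rb s ∈ SO3) ∧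
      (∀ a b : ℝ, 0 < a → a ≤ b → b < L →
        Filter.Tendsto (fun k => ∫ s in Icc a b, frob3 (f (φ k) s - Rb s) ^ 2)
          Filter.atTop (nhds 0)) ∧
      (∀ a b : ℝ, 0 < a → a ≤ b → b < L → ∀ δ : ℝ, |δ| ≤ min a (L - b) →
        ∫ s in Icc a b, frob3 (Rb (s + δ) - Rb s) ^ 2 ≤ c * δ ^ 2) := by
  open scoped Matrix.Norms.Frobenius in
  obtain ⟨φ, hφ, Rb, hRb, hlimit⟩ := frechet_kolmogorov_SO3_compactness_general isCompact_SO3 hlim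
    (fun j => stronglyMeasurable_iff_measurable_entries.2 (hmeas j)) hSO
    (by simpa only [frob3_eq_norm] using hquot)
  refine ⟨φ, hφ, Rb, stronglyMeasurable_iff_measurable_entries.1 hRb, ?_⟩
  simpa only [frob3_eq_norm] using hlimit
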